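/- arXiv:math/0502555 — 2 statements merged into one kernel-verified Lean document; each statement's English description precedes it below -/
import Mathlib

section
/- Let n ≥ 1, let V : ℝⁿ → ℝ be smooth, and let Φ be a global Hamiltonian flow for V; write Φ(t,(y,η)) = (x(t,y,η), ξ(t,y,η)). Fix t₀ ∈ ℝ and (y₀,η₀) ∈ ℝⁿ × ℝⁿ, set (x₀,ξ₀) = Φ(t₀,(y₀,η₀)), and assume the n×n Jacobian of η ↦ x(t₀, y₀, η) at η₀ is invertible. Then there exist an open neighborhood U of (y₀,η₀) in ℝⁿ × ℝⁿ, an open neighborhood Ω of (x₀,y₀) in ℝⁿ × ℝⁿ, and a smooth function ψ : Ω → ℝ such that: (i) for every (y,η) ∈ U, writing (x,ξ) = Φ(t₀,(y,η)), one has (x,y) ∈ Ω, ξ = ∇_x ψ(x,y), and η = −∇_y ψ(x,y); and (ii) the n×n matrix of mixed second partial derivatives (∂²ψ/∂xᵢ∂yⱼ)(x₀,y₀) is invertible. That is, near (y₀,−η₀; x₀,ξ₀) the (twisted) graph of Φ(t₀,·) is generated by the generating function ψ. -/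
open scoped RealInnerProductSpace
open Filter

noncomputable section

/-- Euclidean configuration space `ℝⁿ`. -/
abbrev Euc (n : ℕ) := EuclideanSpace ℝ (Fin n)

/-- The Hamiltonian `p(x, ξ) = ½‖ξ‖² + V(x)` on phase space `ℝⁿ × ℝⁿ`. -/
def Ham (n : ℕ) (V : Euc n → ℝ) (z : Euc n × Euc n) : ℝ :=
  (1 / 2) * ‖z.2‖ ^ 2 + V z.1

/-- The Hamiltonian vector field `X_p(x, ξ) = (ξ, −∇V(x))`. -/
def HamVF (n : ℕ) (V : Euc n → ℝ) (z : Euc n × Euc n) : Euc n × Euc n :=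
  (z.2, -gradient V z.1)

/-- `Φ` is a global Hamiltonian flow for the potential `V`: a smooth map
`ℝ × (ℝⁿ × ℝⁿ) → ℝⁿ × ℝⁿ` with `Φ 0 z = z`, `∂ₜΦ(t,z) = X_p(Φ(t,z))` and the
group law `Φ(s+t, z) = Φ(s, Φ(t, z))`. -/
def IsGlobalHamFlow (n : ℕ) (V : Euc n → ℝ)
    (Φ : ℝ → Euc n × Euc n → Euc n × Euc n) : Prop :=
  ContDiff ℝ (⊤ : ℕ∞) (fun q : ℝ × (Euc n × Euc n) => Φ q.1 q.2) ∧
  (∀ z, Φ 0 z = z) ∧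
  (∀ t z, HasDerivAt (fun s => Φ s z) (HamVF n V (Φ t z)) t) ∧
  (∀ s t z, Φ (s + t) z = Φ s (Φ t z))

/-!
Along the trajectories of a Hamiltonian flow, `d/ds (ξ · dx) = d(ξ · ẋ - H)` by Hamilton's
equations, so the action `S = ∫₀ᵗ (ξ · ẋ - H) ds` is a primitive of `ξ · dx - η · dy` on phase
space. When `B = ∂x/∂η` is invertible, the inverse function theorem makes the endpoints `(x, y)`
local coordinates, and `S` written in these coordinates is the generating function `ψ`. The mixed
second derivative `∂_y ∇ₓψ` is adjoint to `∂ₓ ∇_yψ = -∂η/∂x = -B⁻¹`, hence invertible.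
-/

open scoped ContDiff
open ContinuousLinearMap (fst inl inr)

section Calculus

variable {Z W : Type*} [NormedAddCommGroup Z] [NormedSpace ℝ Z]
  [NormedAddCommGroup W] [NormedSpace ℝ W]

theorem hasFDerivAt_intervalIntegral_of_contDiff {L : ℝ × Z → W} (hL : ContDiff ℝ 1 L)
    (a b : ℝ) (z : Z) :
    HasFDerivAt (fun z => ∫ s in a..b, L (s, z))
      (∫ s in a..b, (fderiv ℝ L (s, z)).comp (inr ℝ ℝ Z)) z := by
  have hL' : Continuous fun q : ℝ × Z => (fderiv ℝ L q).comp (inr ℝ ℝ Z) :=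
    (hL.continuous_fderiv one_ne_zero).clm_comp continuous_const
  have slice (w : Z) : Continuous fun s : ℝ => (s, w) := Continuous.prodMk_left w
  obtain ⟨C, hC⟩ := (isCompact_uIcc (a := a) (b := b)).exists_bound_of_continuousOn
    (hL'.comp (slice z)).continuousOn
  -- The tube lemma replaces compact balls, which an infinite-dimensional `Z` lacks.
  have hbound : ∀ᶠ w in nhds z, ∀ s ∈ Set.uIcc a b,
      ‖(fderiv ℝ L (s, w)).comp (inr ℝ ℝ Z)‖ < C + 1 :=
    isCompact_uIcc.eventually_forall_of_forall_eventually fun s hs =>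
      ((hL'.norm.comp continuous_swap).continuousAt (x := (z, s))).eventually_lt
        continuousAt_const ((hC s hs).trans_lt (lt_add_one C))
  refine intervalIntegral.hasFDerivAt_integral_of_dominated_of_fderiv_le
    (F := fun w s => L (s, w)) (F' := fun w s => (fderiv ℝ L (s, w)).comp (inr ℝ ℝ Z))
    (bound := fun _ => C + 1) hbound ?_ ?_ ?_ ?_ intervalIntegrable_const ?_
  · exact .of_forall fun w => (hL.continuous.comp (slice w)).aestronglyMeasurable
  · exact (hL.continuous.comp (slice z)).intervalIntegrable _ _
  · exact (hL'.comp (slice z)).aestronglyMeasurable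
  · exact .of_forall fun s hs w hw => (hw s (Set.uIoc_subset_uIcc hs)).le
  · exact .of_forall fun s _ w _ => ((hL.differentiable one_ne_zero) (s, w)).hasFDerivAt.comp w
      (hasFDerivAt_prodMk_right s w)

theorem hasDerivAt_fderiv_comp_inr {F : ℝ × Z → W} (hF : ContDiff ℝ 2 F) (s : ℝ) (z : Z) :
    HasDerivAt (fun s => (fderiv ℝ F (s, z)).comp (inr ℝ ℝ Z))
      ((fderiv ℝ (fun q => fderiv ℝ F q (1, 0)) (s, z)).comp (inr ℝ ℝ Z)) s := by
  have hD : HasFDerivAt (fderiv ℝ F) (fderiv ℝ (fderiv ℝ F) (s, z)) (s, z) :=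
    ((hF.fderiv_right (m := 1) le_rfl).differentiable one_ne_zero _).hasFDerivAt
  have hDs : HasDerivAt (fun s => fderiv ℝ F (s, z)) (fderiv ℝ (fderiv ℝ F) (s, z) (1, 0)) s :=
    hD.comp_hasDerivAt s ((hasDerivAt_id s).prodMk (hasDerivAt_const s z))
  have hD1 := (hD.clm_apply (hasFDerivAt_const ((1 : ℝ), (0 : Z)) (s, z))).fderiv
  have hsymm : IsSymmSndFDerivAt ℝ F (s, z) := hF.contDiffAt.isSymmSndFDerivAt (by simp)
  convert! hDs.clm_comp (hasDerivAt_const s (inr ℝ ℝ Z)) using 1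
  ext v
  simp [hD1, hsymm (0, v) (1, 0)]

theorem isUnit_iff_isInvertible {R M : Type*} [Semiring R] [TopologicalSpace M] [AddCommMonoid M]
    [Module R M] {f : M →L[R] M} : IsUnit f ↔ f.IsInvertible := by
  constructor
  · rintro ⟨u, rfl⟩
    exact ⟨ContinuousLinearEquiv.unitsEquiv R M u, rfl⟩
  · rintro ⟨e, rfl⟩
    exact ⟨(ContinuousLinearEquiv.unitsEquiv R M).symm e, rfl⟩

theorem isUnit_fderiv_of_comp_eventuallyEq_id {𝕜 X : Type*} [NontriviallyNormedField 𝕜]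
    [NormedAddCommGroup X] [NormedSpace 𝕜 X] {f g : X → X} {x : X}
    (hf : IsUnit (fderiv 𝕜 f (g x))) (hg : DifferentiableAt 𝕜 g x) (hfg : f ∘ g =ᶠ[nhds x] id) :
    IsUnit (fderiv 𝕜 g x) := by
  have hfd : DifferentiableAt 𝕜 f (g x) :=
    differentiableAt_of_isInvertible_fderiv (isUnit_iff_isInvertible.1 hf)
  have hmul : fderiv 𝕜 f (g x) * fderiv 𝕜 g x = 1 :=
    (hfd.hasFDerivAt.comp x hg.hasFDerivAt).unique
      ((hasFDerivAt_id x).congr_of_eventuallyEq hfg)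
  obtain ⟨u, hu⟩ := hf
  rw [← hu] at hmul
  exact (Units.inv_eq_of_mul_eq_one_right hmul) ▸ (u⁻¹).isUnit

theorem exists_openPartialHomeomorph_contDiffOn_symm {𝕜 X Y : Type*} [RCLike 𝕜]
    [NormedAddCommGroup X] [NormedSpace 𝕜 X] [CompleteSpace X] [NormedAddCommGroup Y]
    [NormedSpace 𝕜 Y] {f : X → Y} {n : ℕ∞ω} (hf : ContDiff 𝕜 n f) (hn : n ≠ 0) {a : X}
    (ha : (fderiv 𝕜 f a).IsInvertible) :
    ∃ e : OpenPartialHomeomorph X Y, e = f ∧ a ∈ e.source ∧ ContDiffOn 𝕜 n e.symm e.target := by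
  have hder {z : X} {f' : X ≃L[𝕜] Y} (h : (f' : X →L[𝕜] Y) = fderiv 𝕜 f z) :
      HasFDerivAt f (f' : X →L[𝕜] Y) z := h ▸ (hf.differentiable hn z).hasFDerivAt
  obtain ⟨f', hf'⟩ := id ha
  set e := hf.contDiffAt.toOpenPartialHomeomorph f (hder hf') hn
  have hO : IsOpen {z | (fderiv 𝕜 f z).IsInvertible} :=
    ContinuousLinearEquiv.isOpen.preimage (hf.continuous_fderiv hn)
  -- For `n = ∞`, being `C^n` at `f a` says nothing about neighbouring points, so the inverse
  -- is restricted to where the inverse function theorem applies pointwise.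
  refine ⟨e.restrOpen _ hO, rfl,
    ⟨hf.contDiffAt.mem_toOpenPartialHomeomorph_source (hder hf') hn, ha⟩, fun q hq => ?_⟩
  obtain ⟨L, hL⟩ := ((e.restrOpen _ hO).map_target hq).2
  exact ((e.restrOpen _ hO).contDiffAt_symm hq (hder hL) hf.contDiffAt).contDiffWithinAt

end Calculus

section PartialGradient

variable {E F : Type*} [NormedAddCommGroup E] [InnerProductSpace ℝ E]
  [NormedAddCommGroup F] [InnerProductSpace ℝ F]
  {ψ : E × F → ℝ} {x : E} {y : F}

theorem gradient_prodMk_left [CompleteSpace E] {ψ' : E × F →L[ℝ] ℝ}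
    (h : HasFDerivAt ψ ψ' (x, y)) :
    gradient (fun x' => ψ (x', y)) x =
      (InnerProductSpace.toDual ℝ E).symm (ψ'.comp (inl ℝ E F)) :=
  congrArg _ (h.comp x (hasFDerivAt_prodMk_left x y)).fderiv

theorem gradient_prodMk_right [CompleteSpace F] {ψ' : E × F →L[ℝ] ℝ}
    (h : HasFDerivAt ψ ψ' (x, y)) :
    gradient (fun y' => ψ (x, y')) y =
      (InnerProductSpace.toDual ℝ F).symm (ψ'.comp (inr ℝ E F)) :=
  congrArg _ (h.comp y (hasFDerivAt_prodMk_right x y)).fderiv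

theorem gradient_left_of_hasFDerivAt_coprod [CompleteSpace E] {a : E} {b : F}
    (h : HasFDerivAt ψ ((innerSL ℝ a).coprod (innerSL ℝ b)) (x, y)) :
    gradient (fun x' => ψ (x', y)) x = a := by
  rw [gradient_prodMk_left h, ContinuousLinearMap.coprod_comp_inl]
  exact (InnerProductSpace.toDual ℝ E).symm_apply_apply a

theorem gradient_right_of_hasFDerivAt_coprod [CompleteSpace F] {a : E} {b : F}
    (h : HasFDerivAt ψ ((innerSL ℝ a).coprod (innerSL ℝ b)) (x, y)) :
    gradient (fun y' => ψ (x, y')) y = b := by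
  rw [gradient_prodMk_right h, ContinuousLinearMap.coprod_comp_inr]
  exact (InnerProductSpace.toDual ℝ F).symm_apply_apply b

theorem inner_fderiv_of_eventuallyEq_toDual_symm [CompleteSpace E] {G P : Type*}
    [NormedAddCommGroup G] [NormedSpace ℝ G] [NormedAddCommGroup P] [NormedSpace ℝ P]
    {f : P → ℝ} {c : G → P} {c' : G →L[ℝ] P} {B : E →L[ℝ] P} {k : G → E} {y : G}
    (hf : ContDiffAt ℝ 2 f (c y)) (hc : HasFDerivAt c c' y)
    (hk : k =ᶠ[nhds y] fun y' =>
      (InnerProductSpace.toDual ℝ E).symm ((fderiv ℝ f (c y')).comp B)) (v : E) (w : G) :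
    ⟪fderiv ℝ k y w, v⟫ = fderiv ℝ (fderiv ℝ f) (c y) (c' w) (B v) := by
  have hD : HasFDerivAt (fderiv ℝ f) (fderiv ℝ (fderiv ℝ f) (c y)) (c y) :=
    ((hf.fderiv_right (m := 1) le_rfl).differentiableAt one_ne_zero).hasFDerivAt
  have hk' := ((InnerProductSpace.toDual ℝ E).symm.toContinuousLinearEquiv.hasFDerivAt.comp y
    ((hD.comp y hc).clm_comp (hasFDerivAt_const B y))).congr_of_eventuallyEq hk
  simp [hk'.fderiv]

variable [CompleteSpace E] [CompleteSpace F]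

theorem fderiv_apply_eq_inner_gradient (h : DifferentiableAt ℝ ψ (x, y)) (v : E × F) :
    fderiv ℝ ψ (x, y) v =
      ⟪gradient (fun x' => ψ (x', y)) x, v.1⟫ + ⟪gradient (fun y' => ψ (x, y')) y, v.2⟫ := by
  rw [gradient_prodMk_left h.hasFDerivAt, gradient_prodMk_right h.hasFDerivAt,
    InnerProductSpace.toDual_symm_apply, InnerProductSpace.toDual_symm_apply,
    ContinuousLinearMap.comp_apply, ContinuousLinearMap.comp_apply, ← map_add]
  simp

theorem fderiv_gradient_left_eq_adjoint (h : ContDiffAt ℝ 2 ψ (x, y)) :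
    fderiv ℝ (fun y' => gradient (fun x' => ψ (x', y')) x) y =
      ContinuousLinearMap.adjoint
        (fderiv ℝ (fun x' => gradient (fun y' => ψ (x', y')) y) x) := by
  have hdiff : ∀ᶠ q in nhds (x, y), DifferentiableAt ℝ ψ q :=
    (h.eventually (by simp)).mono fun _ hq => hq.differentiableAt two_ne_zero
  have hleft : (fun y' => gradient (fun x' => ψ (x', y')) x) =ᶠ[nhds y] fun y' =>
      (InnerProductSpace.toDual ℝ E).symm ((fderiv ℝ ψ (x, y')).comp (inl ℝ E F)) :=
    ((Continuous.prodMk_right x).continuousAt.eventually hdiff).mono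
      fun _ hq => gradient_prodMk_left hq.hasFDerivAt
  have hright : (fun x' => gradient (fun y' => ψ (x', y')) y) =ᶠ[nhds x] fun x' =>
      (InnerProductSpace.toDual ℝ F).symm ((fderiv ℝ ψ (x', y)).comp (inr ℝ E F)) :=
    ((Continuous.prodMk_left y).continuousAt.eventually hdiff).mono
      fun _ hq => gradient_prodMk_right hq.hasFDerivAt
  refine (ContinuousLinearMap.eq_adjoint_iff _ _).2 fun w v => ?_
  rw [inner_fderiv_of_eventuallyEq_toDual_symm h (hasFDerivAt_prodMk_right x y) hleft,
    real_inner_comm,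
    inner_fderiv_of_eventuallyEq_toDual_symm (c := fun x' => (x', y)) h
      (hasFDerivAt_prodMk_left x y) hright]
  exact h.isSymmSndFDerivAt (by simp) _ _

end PartialGradient

section HamiltonianFlow

variable {E : Type*} [NormedAddCommGroup E] [InnerProductSpace ℝ E]

/-- The Liouville one-form `ξ · dx` on phase space `E × E ∋ (x, ξ)`, at the point `z`. -/
def liouvilleForm (z : E × E) : E × E →L[ℝ] ℝ :=
  (innerSL ℝ z.2).comp (fst ℝ E E)

/-- `S` is an action function of `φ : (y, η) ↦ (x, ξ)`: a primitive of `ξ · dx - η · dy`, the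
difference of the pullback of the Liouville form by `φ` and the form itself. Having one makes
`φ` an exact symplectic map. -/
def IsActionFunction (S : E × E → ℝ) (φ : E × E → E × E) : Prop :=
  ∀ z, HasFDerivAt S ((liouvilleForm (φ z)).comp (fderiv ℝ φ z) - liouvilleForm z) z

theorem contDiff_liouvilleForm {n : ℕ∞ω} :
    ContDiff ℝ n (liouvilleForm : E × E → E × E →L[ℝ] ℝ) :=
  ((innerSL ℝ).contDiff.comp contDiff_snd).clm_comp contDiff_const

theorem IsActionFunction.contDiff {S : E × E → ℝ} {φ : E × E → E × E}
    (hS : IsActionFunction S φ) (hφ : ContDiff ℝ ∞ φ) : ContDiff ℝ ∞ S := by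
  refine contDiff_infty_iff_fderiv.2 ⟨fun z => (hS z).differentiableAt, ?_⟩
  rw [funext fun z => (hS z).fderiv]
  exact ((contDiff_liouvilleForm.comp hφ).clm_comp (hφ.fderiv_right (by simp))).sub
    contDiff_liouvilleForm

variable [CompleteSpace E]

/-- The vector field `(∂H/∂ξ, -∂H/∂x)` of a Hamiltonian `H` on the phase space `E × E ∋ (x, ξ)`
of a Hilbert space `E`. -/
def hamiltonianVectorField (H : E × E → ℝ) (z : E × E) : E × E :=
  (gradient (fun ξ => H (z.1, ξ)) z.2, -gradient (fun x => H (x, z.2)) z.1)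

/-- `Φ` solves Hamilton's equations for `H` for all times, starting from the identity at time
`0`. Smoothness in the initial point is left to separate hypotheses. -/
structure IsHamiltonianFlow (H : E × E → ℝ) (Φ : ℝ → E × E → E × E) : Prop where
  map_zero (z : E × E) : Φ 0 z = z
  hasDerivAt (t : ℝ) (z : E × E) :
    HasDerivAt (fun s => Φ s z) (hamiltonianVectorField H (Φ t z)) t

/-- The Lagrangian `ξ · ẋ - H` along the trajectories of `Φ`, where `ẋ = ∂H/∂ξ`, as a function
of the time and the initial point. -/
def actionDensity (H : E × E → ℝ) (Φ : ℝ → E × E → E × E) (q : ℝ × (E × E)) : ℝ :=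
  ⟪(Φ q.1 q.2).2, (hamiltonianVectorField H (Φ q.1 q.2)).1⟫ - H (Φ q.1 q.2)

/-- The action of the trajectory starting at `z`, up to time `t`. -/
def hamiltonianAction (H : E × E → ℝ) (Φ : ℝ → E × E → E × E) (t : ℝ) (z : E × E) : ℝ :=
  ∫ s in (0 : ℝ)..t, actionDensity H Φ (s, z)

variable {H : E × E → ℝ} {Φ : ℝ → E × E → E × E}

theorem fderiv_apply_eq_inner_hamiltonianVectorField {z : E × E} (h : DifferentiableAt ℝ H z)
    (v : E × E) :
    fderiv ℝ H z v =
      ⟪(hamiltonianVectorField H z).1, v.2⟫ - ⟪(hamiltonianVectorField H z).2, v.1⟫ := by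
  rw [fderiv_apply_eq_inner_gradient h]
  simp only [hamiltonianVectorField, inner_neg_left, sub_neg_eq_add]
  exact add_comm _ _

namespace IsHamiltonianFlow

theorem fderiv_uncurry_time (hflow : IsHamiltonianFlow H Φ) {q : ℝ × (E × E)}
    (hΦ : DifferentiableAt ℝ (Function.uncurry Φ) q) :
    fderiv ℝ (Function.uncurry Φ) q (1, 0) = hamiltonianVectorField H (Φ q.1 q.2) := by
  have htime : HasDerivAt (fun s => Φ s q.2) (fderiv ℝ (Function.uncurry Φ) q (1, 0)) q.1 :=
    hΦ.hasFDerivAt.comp_hasDerivAt (f := fun s => (s, q.2)) q.1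
      ((hasDerivAt_id q.1).prodMk (hasDerivAt_const q.1 q.2))
  exact htime.unique (hflow.hasDerivAt q.1 q.2)

theorem actionDensity_eq (hflow : IsHamiltonianFlow H Φ)
    (hΦ : Differentiable ℝ (Function.uncurry Φ)) :
    actionDensity H Φ = fun q =>
      ⟪(Function.uncurry Φ q).2, (fderiv ℝ (Function.uncurry Φ) q (1, 0)).1⟫ -
        H (Function.uncurry Φ q) := by
  funext q
  rw [hflow.fderiv_uncurry_time (hΦ q)]
  rfl

theorem contDiff_actionDensity (hflow : IsHamiltonianFlow H Φ) (hH : ContDiff ℝ 1 H)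
    (hΦ : ContDiff ℝ 2 (Function.uncurry Φ)) : ContDiff ℝ 1 (actionDensity H Φ) := by
  have hvel : ContDiff ℝ 1 fun q => fderiv ℝ (Function.uncurry Φ) q (1, 0) :=
    (hΦ.fderiv_right (m := 1) le_rfl).clm_apply contDiff_const
  have hΦ1 : ContDiff ℝ 1 (Function.uncurry Φ) := hΦ.of_le one_le_two
  rw [hflow.actionDensity_eq (hΦ.differentiable two_ne_zero)]
  exact (hΦ1.snd.inner ℝ hvel.fst).sub (hH.comp hΦ1)

theorem fderiv_actionDensity_apply (hflow : IsHamiltonianFlow H Φ) (hH : Differentiable ℝ H)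
    (hΦ : ContDiff ℝ 2 (Function.uncurry Φ)) (q v : ℝ × (E × E)) :
    fderiv ℝ (actionDensity H Φ) q v =
      ⟪(hamiltonianVectorField H (Φ q.1 q.2)).2, (fderiv ℝ (Function.uncurry Φ) q v).1⟫ +
        ⟪(Φ q.1 q.2).2,
          (fderiv ℝ (fun q => fderiv ℝ (Function.uncurry Φ) q (1, 0)) q v).1⟫ := by
  have hΦd : Differentiable ℝ (Function.uncurry Φ) := hΦ.differentiable two_ne_zero
  have hvel : Differentiable ℝ fun q => fderiv ℝ (Function.uncurry Φ) q (1, 0) :=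
    ((hΦ.fderiv_right (m := 1) le_rfl).clm_apply contDiff_const).differentiable one_ne_zero
  have hd : HasFDerivAt (fun q => ⟪(Function.uncurry Φ q).2,
      (fderiv ℝ (Function.uncurry Φ) q (1, 0)).1⟫ - H (Function.uncurry Φ q)) _ q :=
    ((hΦd q).hasFDerivAt.snd.inner ℝ (hvel q).hasFDerivAt.fst).sub
      ((hH (Function.uncurry Φ q)).hasFDerivAt.comp q (hΦd q).hasFDerivAt)
  have hdH : fderiv ℝ H (Φ q.1 q.2) (fderiv ℝ (Function.uncurry Φ) q v) =
      ⟪(fderiv ℝ (Function.uncurry Φ) q v).2, (hamiltonianVectorField H (Φ q.1 q.2)).1⟫ -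
        ⟪(hamiltonianVectorField H (Φ q.1 q.2)).2, (fderiv ℝ (Function.uncurry Φ) q v).1⟫ := by
    rw [fderiv_apply_eq_inner_hamiltonianVectorField (hH _), real_inner_comm]
  rw [hflow.actionDensity_eq hΦd, hd.fderiv]
  simp only [Function.uncurry, hflow.fderiv_uncurry_time (hΦd q), sub_apply,
    ContinuousLinearMap.comp_apply, ContinuousLinearMap.prod_apply, ContinuousLinearMap.coe_snd',
    ContinuousLinearMap.coe_fst', fderivInnerCLM_apply, hdH]
  ring

-- By Hamilton's equations `∂_v (ξ · ẋ - H) = ξ · ∂_v ẋ + ξ̇ · ∂_v x = d/ds (ξ · ∂_v x)`.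
theorem hasDerivAt_pullback_liouvilleForm (hflow : IsHamiltonianFlow H Φ)
    (hH : Differentiable ℝ H) (hΦ : ContDiff ℝ 2 (Function.uncurry Φ)) (s : ℝ) (z : E × E) :
    HasDerivAt (fun s => (liouvilleForm (Φ s z)).comp (fderiv ℝ (Φ s) z))
      ((fderiv ℝ (actionDensity H Φ) (s, z)).comp (inr ℝ ℝ (E × E))) s := by
  have hξ : HasDerivAt (fun s => (Φ s z).2) (hamiltonianVectorField H (Φ s z)).2 s := by
    simpa using (hflow.hasDerivAt s z).hasFDerivAt.snd.hasDerivAt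
  have hform : HasDerivAt (fun s => liouvilleForm (Φ s z))
      (liouvilleForm (hamiltonianVectorField H (Φ s z))) s := by
    simpa [liouvilleForm] using ((innerSL ℝ).hasFDerivAt.comp_hasDerivAt s hξ).clm_comp
      (hasDerivAt_const s (fst ℝ E E))
  have hslice (r : ℝ) : fderiv ℝ (Φ r) z =
      (fderiv ℝ (Function.uncurry Φ) (r, z)).comp (inr ℝ ℝ (E × E)) :=
    ((hΦ.differentiable two_ne_zero (r, z)).hasFDerivAt.comp z
      (hasFDerivAt_prodMk_right r z)).fderiv
  simp only [hslice]
  convert! hform.clm_comp (hasDerivAt_fderiv_comp_inr hΦ s z) using 1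
  refine ContinuousLinearMap.ext fun v => ?_
  simp [hflow.fderiv_actionDensity_apply hH hΦ, liouvilleForm]

theorem isActionFunction_hamiltonianAction (hflow : IsHamiltonianFlow H Φ)
    (hH : ContDiff ℝ 1 H) (hΦ : ContDiff ℝ 2 (Function.uncurry Φ)) (t : ℝ) :
    IsActionFunction (hamiltonianAction H Φ t) (Φ t) := by
  intro z
  have hL := hflow.contDiff_actionDensity hH hΦ
  have hL' : Continuous fun s => (fderiv ℝ (actionDensity H Φ) (s, z)).comp (inr ℝ ℝ (E × E)) :=
    ((hL.continuous_fderiv one_ne_zero).comp (Continuous.prodMk_left z)).clm_comp continuous_const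
  have h0 : (liouvilleForm (Φ 0 z)).comp (fderiv ℝ (Φ 0) z) = liouvilleForm z := by
    rw [show Φ 0 = id from funext hflow.map_zero, fderiv_id]
    rfl
  rw [← h0, ← intervalIntegral.integral_eq_sub_of_hasDerivAt
    (f := fun s => (liouvilleForm (Φ s z)).comp (fderiv ℝ (Φ s) z))
    (fun s _ => hflow.hasDerivAt_pullback_liouvilleForm (hH.differentiable one_ne_zero) hΦ s z)
    (hL'.intervalIntegrable _ _)]
  exact hasFDerivAt_intervalIntegral_of_contDiff hL 0 t z

end IsHamiltonianFlow

end HamiltonianFlow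

section GeneratingFunction

variable {E : Type*} [NormedAddCommGroup E] [InnerProductSpace ℝ E]

/-- The map `(y, η) ↦ (x, y)` sending a point to the final and initial positions of its
trajectory under `φ : (y, η) ↦ (x, ξ)`. A local inverse provides the coordinates `(x, y)` on the
graph of `φ`. -/
def endpointMap (φ : E × E → E × E) (z : E × E) : E × E :=
  ((φ z).1, z.1)

/-- Near `z₀ = (y₀, η₀)`, the twisted graph of `φ : (y, η) ↦ (x, ξ)` is given by
`ξ = ∇ₓψ(x, y)`, `η = -∇_yψ(x, y)` for a smooth `ψ` whose mixed second derivative is invertible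
at the endpoints of `z₀`. -/
def HasLocalGeneratingFunction [CompleteSpace E] (φ : E × E → E × E) (z₀ : E × E) : Prop :=
  ∃ U Ω : Set (E × E), IsOpen U ∧ IsOpen Ω ∧ z₀ ∈ U ∧ endpointMap φ z₀ ∈ Ω ∧
    ∃ ψ : E × E → ℝ, ContDiffOn ℝ ∞ ψ Ω ∧
      (∀ z ∈ U,
        endpointMap φ z ∈ Ω ∧
        (φ z).2 = gradient (fun x => ψ (x, z.1)) (φ z).1 ∧
        z.2 = -gradient (fun y => ψ ((φ z).1, y)) z.1) ∧
      IsUnit (fderiv ℝ (fun y => gradient (fun x => ψ (x, y)) (φ z₀).1) z₀.1)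

variable {φ : E × E → E × E}

theorem contDiff_endpointMap {n : ℕ∞ω} (hφ : ContDiff ℝ n φ) : ContDiff ℝ n (endpointMap φ) :=
  hφ.fst.prodMk contDiff_fst

theorem hasFDerivAt_endpointMap {φ' : E × E →L[ℝ] E × E} {z : E × E} (hφ : HasFDerivAt φ φ' z) :
    HasFDerivAt (endpointMap φ) (((fst ℝ E E).comp φ').prod (fst ℝ E E)) z :=
  hφ.fst.prodMk hasFDerivAt_fst

theorem isInvertible_fderiv_endpointMap {y η : E} (hφ : DifferentiableAt ℝ φ (y, η))
    (hη : IsUnit (fderiv ℝ (fun η => (φ (y, η)).1) η)) :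
    (fderiv ℝ (endpointMap φ) (y, η)).IsInvertible := by
  obtain ⟨B, hB⟩ := isUnit_iff_isInvertible.1 hη
  set A : E × E →L[ℝ] E := (fst ℝ E E).comp (fderiv ℝ φ (y, η))
  have hA : (B : E →L[ℝ] E) = A.comp (inr ℝ E E) :=
    hB.trans (hφ.hasFDerivAt.fst.comp η (hasFDerivAt_prodMk_right y η)).fderiv
  refine ⟨((ContinuousLinearEquiv.refl ℝ E).skewProd B (A.comp (inl ℝ E E))).trans
    (ContinuousLinearEquiv.prodComm ℝ E E), ?_⟩
  rw [(hasFDerivAt_endpointMap hφ.hasFDerivAt).fderiv]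
  refine ContinuousLinearMap.ext fun v => Prod.ext ?_ rfl
  have hBv : B v.2 = A (0, v.2) := DFunLike.congr_fun hA v.2
  calc B v.2 + A (v.1, 0) = A ((0, v.2) + (v.1, 0)) := by rw [hBv, map_add]
    _ = A v := by simp

namespace IsActionFunction

variable {S : E × E → ℝ}

theorem hasFDerivAt_comp_rightInverse (hS : IsActionFunction S φ)
    {σ : E × E → E × E} {q : E × E} (hφ : DifferentiableAt ℝ φ (σ q))
    (hσ : DifferentiableAt ℝ σ q) (hright : endpointMap φ ∘ σ =ᶠ[nhds q] id) :
    HasFDerivAt (S ∘ σ) ((innerSL ℝ (φ (σ q)).2).coprod (innerSL ℝ (-(σ q).2))) q := by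
  have hD := ((hasFDerivAt_endpointMap hφ.hasFDerivAt).comp q hσ.hasFDerivAt).unique
    ((hasFDerivAt_id q).congr_of_eventuallyEq hright)
  convert! (hS (σ q)).comp q hσ.hasFDerivAt using 1
  refine ContinuousLinearMap.ext fun v => ?_
  have hDv : ((fderiv ℝ φ (σ q) (fderiv ℝ σ q v)).1, (fderiv ℝ σ q v).1) = v :=
    DFunLike.congr_fun hD v
  have hx : (fderiv ℝ φ (σ q) (fderiv ℝ σ q v)).1 = v.1 :=
    (congrArg Prod.fst hDv :)
  have hy : (fderiv ℝ σ q v).1 = v.2 := (congrArg Prod.snd hDv :)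
  simp [liouvilleForm, hx, hy, sub_eq_add_neg]

section LocalInverse

variable {σ : E × E → E × E} {Ω : Set (E × E)}

theorem hasFDerivAt_comp_of_rightInvOn (hS : IsActionFunction S φ) (hφ : Differentiable ℝ φ)
    (hΩ : IsOpen Ω) (hσ : DifferentiableOn ℝ σ Ω) (hright : Set.RightInvOn σ (endpointMap φ) Ω)
    {q : E × E} (hq : q ∈ Ω) :
    HasFDerivAt (S ∘ σ) ((innerSL ℝ (φ (σ q)).2).coprod (innerSL ℝ (-(σ q).2))) q :=
  hS.hasFDerivAt_comp_rightInverse (hφ _) (hσ.differentiableAt (hΩ.mem_nhds hq))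
    (eventually_of_mem (hΩ.mem_nhds hq) hright)

variable [CompleteSpace E]

theorem isUnit_fderiv_gradient_comp (hS : IsActionFunction S φ) (hφ : ContDiff ℝ ∞ φ)
    (hΩ : IsOpen Ω) (hσ : ContDiffOn ℝ ∞ σ Ω) (hright : Set.RightInvOn σ (endpointMap φ) Ω)
    {x y : E} (hxy : (x, y) ∈ Ω)
    (hη : IsUnit (fderiv ℝ (fun η => (φ (y, η)).1) (σ (x, y)).2)) :
    IsUnit (fderiv ℝ (fun y' => gradient (fun x' => (S ∘ σ) (x', y')) x) y) := by
  have hσxy : ContDiffAt ℝ ∞ σ (x, y) := hσ.contDiffAt (hΩ.mem_nhds hxy)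
  have hψ : ContDiffAt ℝ 2 (S ∘ σ) (x, y) :=
    ((hS.contDiff hφ).contDiffAt.comp (x, y) hσxy).of_le ENat.LEInfty.out
  have hnear : ∀ᶠ x' in nhds x, (x', y) ∈ Ω :=
    (Continuous.prodMk_left y).continuousAt.eventually (hΩ.mem_nhds hxy)
  have hgrad : (fun x' => gradient (fun y' => (S ∘ σ) (x', y')) y) =ᶠ[nhds x]
      fun x' => -(σ (x', y)).2 :=
    hnear.mono fun x' hx' => gradient_right_of_hasFDerivAt_coprod
      (hS.hasFDerivAt_comp_of_rightInvOn (hφ.differentiable (by simp)) hΩ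
        (hσ.differentiableOn (by simp)) hright hx')
  have hinv : (fun η => (φ (y, η)).1) ∘ (fun x' => (σ (x', y)).2) =ᶠ[nhds x] id :=
    hnear.mono fun x' hx' => by
      have hq : ((φ (σ (x', y))).1, (σ (x', y)).1) = (x', y) := hright hx'
      have hy : ((y, (σ (x', y)).2) : E × E) = σ (x', y) :=
        Prod.ext (congrArg Prod.snd hq).symm rfl
      exact (congrArg (fun z => (φ z).1) hy).trans (congrArg Prod.fst hq)
  have hσ₂ : DifferentiableAt ℝ (fun x' => (σ (x', y)).2) x :=
    ((hσxy.differentiableAt (by simp)).comp x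
      (hasFDerivAt_prodMk_left x y).differentiableAt).snd
  rw [fderiv_gradient_left_eq_adjoint hψ, hgrad.fderiv_eq, fderiv_fun_neg]
  exact (isUnit_fderiv_of_comp_eventuallyEq_id hη hσ₂ hinv).neg.star

end LocalInverse

theorem hasLocalGeneratingFunction [CompleteSpace E] (hS : IsActionFunction S φ)
    (hφ : ContDiff ℝ ∞ φ) {y₀ η₀ : E} (hη : IsUnit (fderiv ℝ (fun η => (φ (y₀, η)).1) η₀)) :
    HasLocalGeneratingFunction φ (y₀, η₀) := by
  have hφd : Differentiable ℝ φ := hφ.differentiable (by simp)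
  obtain ⟨e, he, hz₀, hsymm⟩ := exists_openPartialHomeomorph_contDiffOn_symm
    (contDiff_endpointMap hφ) (by simp) (isInvertible_fderiv_endpointMap (hφd _) hη)
  have hmem {z : E × E} (hz : z ∈ e.source) : endpointMap φ z ∈ e.target :=
    he ▸ e.map_source hz
  have hleft {z : E × E} (hz : z ∈ e.source) : e.symm (endpointMap φ z) = z :=
    he ▸ e.left_inv hz
  have hright : Set.RightInvOn e.symm (endpointMap φ) e.target := he ▸ fun _ hq => e.right_inv hq
  have hgen {z : E × E} (hz : z ∈ e.source) : HasFDerivAt (S ∘ e.symm)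
      ((innerSL ℝ (φ z).2).coprod (innerSL ℝ (-z.2))) (endpointMap φ z) := by
    simpa only [hleft hz] using hS.hasFDerivAt_comp_of_rightInvOn hφd e.open_target
      (hsymm.differentiableOn (by simp)) hright (hmem hz)
  refine ⟨e.source, e.target, e.open_source, e.open_target, hz₀, hmem hz₀, S ∘ e.symm,
    (hS.contDiff hφ).comp_contDiffOn hsymm, fun z hz => ⟨hmem hz, ?_, ?_⟩, ?_⟩
  · exact (gradient_left_of_hasFDerivAt_coprod (hgen hz)).symm
  · exact neg_eq_iff_eq_neg.1 (gradient_right_of_hasFDerivAt_coprod (hgen hz)).symm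
  · refine hS.isUnit_fderiv_gradient_comp hφ e.open_target hsymm hright (hmem hz₀) ?_
    exact (congrArg Prod.snd (hleft hz₀)).symm ▸ hη

end IsActionFunction

theorem flow_graph_has_generating_function_general [CompleteSpace E] {H : E × E → ℝ}
    (hH : ContDiff ℝ 1 H) {Φ : ℝ → E × E → E × E} (hΦ : ContDiff ℝ ∞ (Function.uncurry Φ))
    (hflow : IsHamiltonianFlow H Φ) (t₀ : ℝ) (y₀ η₀ : E)
    (hcf : IsUnit (fderiv ℝ (fun η => (Φ t₀ (y₀, η)).1) η₀)) :
    HasLocalGeneratingFunction (Φ t₀) (y₀, η₀) := by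
  have hS : IsActionFunction (hamiltonianAction H Φ t₀) (Φ t₀) :=
    hflow.isActionFunction_hamiltonianAction hH (hΦ.of_le ENat.LEInfty.out) t₀
  exact hS.hasLocalGeneratingFunction (hΦ.comp (contDiff_prodMk_right t₀)) hcf

end GeneratingFunction

section Ham

variable {n : ℕ} {V : Euc n → ℝ}

theorem contDiff_ham {m : ℕ∞ω} (hV : ContDiff ℝ m V) : ContDiff ℝ m (Ham n V) :=
  (contDiff_const.mul (contDiff_snd.norm_sq ℝ)).add (hV.comp contDiff_fst)

theorem hasFDerivAt_ham {z : Euc n × Euc n} (hV : DifferentiableAt ℝ V z.1) :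
    HasFDerivAt (Ham n V) ((innerSL ℝ (gradient V z.1)).coprod (innerSL ℝ z.2)) z := by
  convert! (hasFDerivAt_snd.norm_sq.const_mul (1 / 2 : ℝ)).add
    (hV.hasGradientAt.hasFDerivAt.comp z hasFDerivAt_fst) using 1
  ext v <;> simp

theorem hamiltonianVectorField_ham (hV : Differentiable ℝ V) (z : Euc n × Euc n) :
    hamiltonianVectorField (Ham n V) z = HamVF n V z :=
  have hd : HasFDerivAt (Ham n V) _ (z.1, z.2) := hasFDerivAt_ham (hV z.1)
  Prod.ext (gradient_right_of_hasFDerivAt_coprod hd)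
    (congrArg Neg.neg (gradient_left_of_hasFDerivAt_coprod hd))

theorem IsGlobalHamFlow.isHamiltonianFlow {Φ : ℝ → Euc n × Euc n → Euc n × Euc n}
    (hΦ : IsGlobalHamFlow n V Φ) (hV : Differentiable ℝ V) : IsHamiltonianFlow (Ham n V) Φ where
  map_zero := hΦ.2.1
  hasDerivAt t z := (hamiltonianVectorField_ham hV (Φ t z)).symm ▸ hΦ.2.2.1 t z

end Ham

/-- **Generating function for the flow near a central-field point.**  If the Jacobian
of `η ↦ x(t₀, y₀, η)` at `η₀` is invertible then, with `(x₀, ξ₀) = Φ(t₀, (y₀, η₀))`,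
there are neighborhoods `U ∋ (y₀, η₀)`, `Ω ∋ (x₀, y₀)` and a smooth `ψ : Ω → ℝ` such
that for `(y, η) ∈ U`, writing `(x, ξ) = Φ(t₀, (y, η))`, one has `(x, y) ∈ Ω`,
`ξ = ∇ₓψ(x, y)`, `η = −∇_yψ(x, y)`, and the matrix of mixed second partials
`∂²ψ/∂x∂y` at `(x₀, y₀)` is invertible. -/
theorem flow_graph_has_generating_function
    (n : ℕ) (hn : 1 ≤ n)
    (V : Euc n → ℝ) (hV : ContDiff ℝ (⊤ : ℕ∞) V)
    (Φ : ℝ → Euc n × Euc n → Euc n × Euc n) (hΦ : IsGlobalHamFlow n V Φ)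
    (t₀ : ℝ) (y₀ η₀ x₀ ξ₀ : Euc n) (hxξ : (x₀, ξ₀) = Φ t₀ (y₀, η₀))
    (hcf : IsUnit (fderiv ℝ (fun η => (Φ t₀ (y₀, η)).1) η₀)) :
    ∃ U Ω : Set (Euc n × Euc n), IsOpen U ∧ IsOpen Ω ∧
      (y₀, η₀) ∈ U ∧ (x₀, y₀) ∈ Ω ∧
      ∃ ψ : Euc n × Euc n → ℝ, ContDiffOn ℝ (⊤ : ℕ∞) ψ Ω ∧
        (∀ yη ∈ U,
          ((Φ t₀ yη).1, yη.1) ∈ Ω ∧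
          (Φ t₀ yη).2 = gradient (fun x' => ψ (x', yη.1)) (Φ t₀ yη).1 ∧
          yη.2 = -gradient (fun y' => ψ ((Φ t₀ yη).1, y')) yη.1) ∧
        IsUnit (fderiv ℝ (fun y' => gradient (fun x' => ψ (x', y')) x₀) y₀) := by
  obtain rfl : x₀ = (Φ t₀ (y₀, η₀)).1 := congrArg Prod.fst hxξ
  exact flow_graph_has_generating_function_general (contDiff_ham (hV.of_le (by simp))) hΦ.1
    (hΦ.isHamiltonianFlow (hV.differentiable (by simp))) t₀ y₀ η₀ hcf
end
end

section
/- Let n ≥ 1, let V : ℝⁿ → ℝ be smooth, let Φ be a global Hamiltonian flow for V, and let t₀, (y₀,η₀), z₀, T × Y × Z and η̂ be as in the central field setting. For λ ∈ ℝ define the action S : T × Y × Z → ℝ by S(t,y,z) = ∫₀ᵗ (½‖ξ(s,y,η̂(t,y,z))‖² − V(x(s,y,η̂(t,y,z))) + λ) ds. Then S is smooth and, possibly after shrinking T × Y × Z around (t₀,y₀,z₀), for all (t,y,z) ∈ T × Y × Z: ∇_z S(t,y,z) = ξ(t, y, η̂(t,y,z)) and ∇_y S(t,y,z) = −η̂(t,y,z).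 -/
open scoped RealInnerProductSpace
open Filter

noncomputable section

/-!
Differentiating `x' = ξ` and `ξ' = -∇V(x)` in the initial condition `q` gives
`d/ds ⟨ξ, ∂_q x⟩ = ⟨ξ, ∂_q ξ⟩ - ⟨∇V(x), ∂_q x⟩`, which is the `q`-derivative of the Lagrangian along
the trajectory. Integrating from `0` to `t`, only the endpoints contribute: at fixed `t` and with
`q = (y, η)`, the action has differential `⟨ξ, dx⟩ - ⟨η, dy⟩`. Along `η = η̂(t, y, z)` the endpoint
`x` is `z`, so this differential is `⟨ξ, dz⟩ - ⟨η̂, dy⟩`, from which both gradients are read off.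
-/

open Function
open scoped Topology Gradient

section ParametricIntervalIntegral

variable {H F : Type*} [NormedAddCommGroup H] [NormedSpace ℝ H] [NormedAddCommGroup F]
  [NormedSpace ℝ F]

theorem hasFDerivAt_parametric_intervalIntegral {f : ℝ → H → F} {f' : ℝ → H → H →L[ℝ] F}
    (hf : ∀ x, Continuous fun u => f u x) (hf' : Continuous (uncurry f'))
    (hff' : ∀ u x, HasFDerivAt (f u) (f' u x) x) (a b : ℝ) (x₀ : H) :
    HasFDerivAt (fun x => ∫ u in a..b, f u x) (∫ u in a..b, f' u x₀) x₀ := by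
  have hf'x₀ : Continuous fun u => f' u x₀ := hf'.comp (.prodMk_left x₀)
  have hbound : ∀ᶠ x in 𝓝 x₀, ∀ u ∈ Set.uIcc a b, ‖f' u x‖ < ‖f' u x₀‖ + 1 := by
    refine isCompact_uIcc.eventually_forall_of_forall_eventually fun u _ => ?_
    have hleft : Continuous fun p : H × ℝ => ‖f' p.2 p.1‖ := (hf'.comp continuous_swap).norm
    have hright : Continuous fun p : H × ℝ => ‖f' p.2 x₀‖ + 1 := by fun_prop
    exact hleft.continuousAt.eventually_lt hright.continuousAt (lt_add_one _)
  exact intervalIntegral.hasFDerivAt_integral_of_dominated_of_fderiv_le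
    (F := fun x u => f u x) (F' := fun x u => f' u x) hbound
    (.of_forall fun x => (hf x).aestronglyMeasurable) ((hf x₀).intervalIntegrable _ _)
    hf'x₀.aestronglyMeasurable
    (.of_forall fun u hu x hx => (hx u (Set.uIoc_subset_uIcc hu)).le)
    ((hf'x₀.norm.add continuous_const).intervalIntegrable _ _)
    (.of_forall fun u _ x _ => hff' u x)

theorem continuousMultilinearMap_intervalIntegral_apply {ι : Type*} [Fintype ι] {M : ι → Type*}
    [∀ i, NormedAddCommGroup (M i)] [∀ i, NormedSpace ℝ (M i)] {μ : MeasureTheory.Measure ℝ}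
    {a b : ℝ} {g : ℝ → ContinuousMultilinearMap ℝ M F} (hg : IntervalIntegrable g μ a b)
    (v : ∀ i, M i) : (∫ u in a..b, g u ∂μ) v = ∫ u in a..b, g u v ∂μ := by
  simp_rw [intervalIntegral.intervalIntegral_eq_integral_uIoc,
    ← ContinuousMultilinearMap.integral_apply hg.def' v, smul_apply]

variable [CompleteSpace F]

theorem hasFTaylorSeriesUpTo_parametric_intervalIntegral {n : WithTop ℕ∞} {f : ℝ → H → F}
    {p : ℝ → H → FormalMultilinearSeries ℝ H F} (hp : ∀ u, HasFTaylorSeriesUpTo n (f u) (p u))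
    (hcont : ∀ m : ℕ, m ≤ n → Continuous (uncurry fun u x => p u x m)) (a b : ℝ) :
    HasFTaylorSeriesUpTo n (fun x => ∫ u in a..b, f u x) fun x m => ∫ u in a..b, p u x m where
  zero_eq x := by
    simp only [← fun u => (hp u).zero_eq x]
    exact ((continuousMultilinearCurryFin0 ℝ H F).toLinearIsometry.intervalIntegral_comp_comm
      fun u => p u x 0).symm
  fderiv m hm x := by
    have hsucc : Continuous (uncurry fun u x => p u x m.succ) :=
      hcont _ (ENat.add_one_natCast_le_withTop_of_lt hm)
    let p' (u : ℝ) (x : H) : H →L[ℝ] H [×m]→L[ℝ] F := (p u x m.succ).curryLeft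
    have hp' : Continuous (uncurry p') :=
      (continuousMultilinearCurryLeftEquiv ℝ (fun _ => H) F).continuous.comp hsucc
    have hp'x : Continuous fun u => p' u x := hp'.comp (.prodMk_left x)
    refine (hasFDerivAt_parametric_intervalIntegral (fun x => (hcont m hm.le).comp (.prodMk_left x))
      hp' (fun u => (hp u).fderiv m hm) a b x).congr_fderiv ?_
    ext v w
    calc (∫ u in a..b, p' u x) v w
      _ = (∫ u in a..b, p' u x v) w := by
        rw [ContinuousLinearMap.intervalIntegral_apply (hp'x.intervalIntegrable a b)]
      _ = ∫ u in a..b, p u x m.succ (Fin.cons v w) :=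
        continuousMultilinearMap_intervalIntegral_apply
          ((hp'x.clm_apply continuous_const).intervalIntegrable a b) w
      _ = (∫ u in a..b, p u x m.succ) (Fin.cons v w) :=
        (continuousMultilinearMap_intervalIntegral_apply
          ((hsucc.comp (.prodMk_left x)).intervalIntegrable a b) _).symm
  cont m hm := intervalIntegral.continuous_parametric_intervalIntegral_of_continuous'
    (f := fun x u => p u x m) ((hcont m hm).comp continuous_swap) a b

theorem contDiff_parametric_intervalIntegral {n : ℕ∞} {f : ℝ → H → F}
    (hf : ContDiff ℝ n (uncurry f)) (a b : ℝ) :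
    ContDiff ℝ n fun x => ∫ u in a..b, f u x := by
  let slice (u : ℝ) : H →ᴬ[ℝ] ℝ × H := (ContinuousAffineMap.const ℝ H u).prod (.id ℝ H)
  have htaylor (u : ℝ) : HasFTaylorSeriesUpTo n (f u) fun x m =>
      (ftaylorSeries ℝ (uncurry f) (u, x) m).compContinuousLinearMap fun _ => .inr ℝ ℝ H :=
    hasFTaylorSeriesUpToOn_univ_iff.1
      ((hf.ftaylorSeries.hasFTaylorSeriesUpToOn Set.univ).comp_continuousAffineMap (slice u))
  refine (hasFTaylorSeriesUpTo_parametric_intervalIntegral htaylor (fun m hm => ?_) a b).contDiff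
  exact (ContinuousMultilinearMap.compContinuousLinearMapL fun _ => .inr ℝ ℝ H).continuous.comp
    (hf.continuous_iteratedFDeriv hm)

theorem contDiff_parametric_primitive {n : ℕ∞} {f : ℝ → H → F} (hf : ContDiff ℝ n (uncurry f)) :
    ContDiff ℝ n fun p : ℝ × H => ∫ u in (0 : ℝ)..p.1, f u p.2 := by
  -- Rescaling to `[0, 1]` moves the variable endpoint into the integrand.
  have hrescale (p : ℝ × H) :
      ∫ u in (0 : ℝ)..p.1, f u p.2 = p.1 • ∫ u in (0 : ℝ)..1, f (p.1 * u) p.2 := by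
    simp [intervalIntegral.smul_integral_comp_mul_left (fun u => f u p.2)]
  have hscaled : ContDiff ℝ n (uncurry fun (u : ℝ) (p : ℝ × H) => f (p.1 * u) p.2) :=
    hf.comp (g := uncurry f) (f := fun r : ℝ × ℝ × H => (r.2.1 * r.1, r.2.2)) (by fun_prop)
  simp only [hrescale]
  exact contDiff_fst.smul (contDiff_parametric_intervalIntegral hscaled 0 1)

end ParametricIntervalIntegral

theorem hasDerivAt_fderiv_of_hasDerivAt {H F : Type*} [NormedAddCommGroup H] [NormedSpace ℝ H]
    [NormedAddCommGroup F] [NormedSpace ℝ F] {f f' : ℝ → H → F} (hf : ContDiff ℝ 2 (uncurry f))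
    (hff' : ∀ s q, HasDerivAt (fun s => f s q) (f' s q) s) (s : ℝ) (q : H) :
    HasDerivAt (fun s => fderiv ℝ (f s) q) (fderiv ℝ (f' s) q) s := by
  have hD (s q) : HasFDerivAt (uncurry f) (fderiv ℝ (uncurry f) (s, q)) (s, q) :=
    (hf.differentiable two_ne_zero _).hasFDerivAt
  have hD2 : HasFDerivAt (fderiv ℝ (uncurry f)) (fderiv ℝ (fderiv ℝ (uncurry f)) (s, q)) (s, q) :=
    ((hf.fderiv_right (m := 1) le_rfl).differentiable one_ne_zero _).hasFDerivAt
  have htime (s q) : HasDerivAt (fun s => (s, q)) ((1, 0) : ℝ × H) s :=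
    (hasDerivAt_id s).prodMk (hasDerivAt_const s q)
  have hfderiv (s) : fderiv ℝ (f s) q = fderiv ℝ (uncurry f) (s, q) ∘L .inr ℝ ℝ H :=
    ((hD s q).comp q (hasFDerivAt_prodMk_right s q)).fderiv
  have hf' : f' s = fun q => fderiv ℝ (uncurry f) (s, q) (1, 0) :=
    funext fun q => (hff' s q).unique ((hD s q).comp_hasDerivAt (f := (·, q)) s (htime s q))
  have hsymm : IsSymmSndFDerivAt ℝ (uncurry f) (s, q) := hf.contDiffAt.isSymmSndFDerivAt (by simp)
  have hfderiv' : fderiv ℝ (f' s) q =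
      fderiv ℝ (fderiv ℝ (uncurry f)) (s, q) (1, 0) ∘L .inr ℝ ℝ H := by
    have hDq : HasFDerivAt (fun q => fderiv ℝ (uncurry f) (s, q))
        (fderiv ℝ (fderiv ℝ (uncurry f)) (s, q) ∘L .inr ℝ ℝ H) q :=
      hD2.comp q (hasFDerivAt_prodMk_right s q)
    rw [hf', (hDq.clm_apply (hasFDerivAt_const ((1, 0) : ℝ × H) q)).fderiv]
    ext v
    simp [hsymm.eq (0, v) (1, 0)]
  rw [hfderiv', funext hfderiv]
  have hDs := hD2.comp_hasDerivAt (f := (·, q)) s (htime s q)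
  simpa using hDs.clm_comp (hasDerivAt_const s (.inr ℝ ℝ H))

section Action

variable {E H : Type*} [NormedAddCommGroup E] [InnerProductSpace ℝ E]
  [NormedAddCommGroup H] [NormedSpace ℝ H]

/-- The Lagrangian `½‖ξ‖² - V(x)` of a unit mass in the potential `V`, as a function on phase
space and shifted by the constant `lam`. -/
def lagrangian (V : E → ℝ) (lam : ℝ) (p : E × E) : ℝ :=
  (1 / 2) * ‖p.2‖ ^ 2 - V p.1 + lam

/-- The action up to time `t` of the phase-space curve `s ↦ Φ s q`. The parameter `q` is the
initial condition when `Φ` is a flow. -/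
def action (V : E → ℝ) (lam : ℝ) (Φ : ℝ → H → E × E) (t : ℝ) (q : H) : ℝ :=
  ∫ s in (0 : ℝ)..t, lagrangian V lam (Φ s q)

theorem contDiff_lagrangian {n : WithTop ℕ∞} {V : E → ℝ} (hV : ContDiff ℝ n V) (lam : ℝ) :
    ContDiff ℝ n (lagrangian V lam) :=
  ((contDiff_const.mul (contDiff_snd.norm_sq ℝ)).sub (hV.comp contDiff_fst)).add contDiff_const

theorem contDiff_action {n : ℕ∞} {V : E → ℝ} {Φ : ℝ → H → E × E} (hV : ContDiff ℝ n V)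
    (hΦ : ContDiff ℝ n (uncurry Φ)) (lam : ℝ) : ContDiff ℝ n (uncurry (action V lam Φ)) :=
  contDiff_parametric_primitive (f := fun s q => lagrangian V lam (Φ s q))
    ((contDiff_lagrangian hV lam).comp hΦ)

variable [CompleteSpace E]

/-- `γ` solves Hamilton's equations `x' = ξ`, `ξ' = -∇V(x)` for the Hamiltonian
`½‖ξ‖² + V(x)`. -/
def IsHamiltonianTrajectory (V : E → ℝ) (γ : ℝ → E × E) : Prop :=
  ∀ t, HasDerivAt γ ((γ t).2, -∇ V (γ t).1) t

theorem hasFDerivAt_lagrangian {V : E → ℝ} {p : E × E} (hV : DifferentiableAt ℝ V p.1) (lam : ℝ) :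
    HasFDerivAt (lagrangian V lam)
      (innerSL ℝ p.2 ∘L .snd ℝ E E - innerSL ℝ (∇ V p.1) ∘L .fst ℝ E E) p := by
  have hkinetic := (hasFDerivAt_snd (𝕜 := ℝ) (p := p)).norm_sq.const_mul (1 / 2)
  have hpotential := hV.hasGradientAt.hasFDerivAt.comp p hasFDerivAt_fst
  refine ((hkinetic.sub hpotential).add_const lam).congr_fderiv ?_
  ext v <;> simp

section FirstVariation

variable {V : E → ℝ} {Φ : ℝ → H → E × E} (hV : ContDiff ℝ 1 V) (hΦ : ContDiff ℝ 2 (uncurry Φ))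
  (hsol : ∀ q, IsHamiltonianTrajectory V fun s => Φ s q)
include hV hΦ hsol

theorem hasDerivAt_inner_momentum_fderiv_position (lam s : ℝ) (q v : H) :
    HasDerivAt (fun s => inner ℝ (Φ s q).2 (fderiv ℝ (fun q => (Φ s q).1) q v))
      (fderiv ℝ (fun q => lagrangian V lam (Φ s q)) q v) s := by
  have hΦs : DifferentiableAt ℝ (Φ s) q :=
    (hΦ.comp (contDiff_prodMk_right s)).differentiable two_ne_zero q
  have hmomentum : HasDerivAt (fun s => (Φ s q).2) (-∇ V (Φ s q).1) s := (hsol q s).snd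
  have hposition : HasDerivAt (fun s => fderiv ℝ (fun q => (Φ s q).1) q v)
      (fderiv ℝ (fun q => (Φ s q).2) q v) s := by
    simpa using (hasDerivAt_fderiv_of_hasDerivAt hΦ.fst (fun s q => (hsol q s).fst) s q).clm_apply
      (hasDerivAt_const s v)
  have hlagrangian := (hasFDerivAt_lagrangian (p := Φ s q)
    (hV.differentiable one_ne_zero _) lam).comp q hΦs.hasFDerivAt
  refine (hmomentum.inner ℝ hposition).congr_deriv ?_
  rw [show (fun q => lagrangian V lam (Φ s q)) = lagrangian V lam ∘ Φ s from rfl,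
    hlagrangian.fderiv, hΦs.hasFDerivAt.fst.fderiv, hΦs.hasFDerivAt.snd.fderiv]
  simp [sub_eq_add_neg]

theorem hasFDerivAt_action (lam t : ℝ) (q : H) :
    HasFDerivAt (action V lam Φ t)
      (innerSL ℝ (Φ t q).2 ∘L fderiv ℝ (fun q => (Φ t q).1) q -
        innerSL ℝ (Φ 0 q).2 ∘L fderiv ℝ (fun q => (Φ 0 q).1) q) q := by
  have hL : ContDiff ℝ 1 (uncurry fun s q => lagrangian V lam (Φ s q)) :=
    (contDiff_lagrangian hV lam).comp (hΦ.of_le one_le_two)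
  have hL' : Continuous (uncurry fun s => fderiv ℝ fun q => lagrangian V lam (Φ s q)) :=
    (ContDiff.fderiv (n := 0) (f := fun (p : ℝ × H) q => lagrangian V lam (Φ p.1 q))
      (hL.comp (contDiff_fst.fst.prodMk contDiff_snd)) contDiff_snd (by simp)).continuous
  have hL'q : Continuous fun s => fderiv ℝ (fun q => lagrangian V lam (Φ s q)) q :=
    hL'.comp (.prodMk_left q)
  refine (hasFDerivAt_parametric_intervalIntegral (fun q => hL.continuous.comp (.prodMk_left q)) hL'
    (fun s q => ((hL.comp (contDiff_prodMk_right s)).differentiable one_ne_zero q).hasFDerivAt)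
    0 t q).congr_fderiv ?_
  ext v
  rw [ContinuousLinearMap.intervalIntegral_apply (hL'q.intervalIntegrable _ _),
    intervalIntegral.integral_eq_sub_of_hasDerivAt
      (fun s _ => hasDerivAt_inner_momentum_fderiv_position hV hΦ hsol lam s q v)
      ((hL'q.clm_apply continuous_const).intervalIntegrable _ _)]
  rfl

end FirstVariation

theorem hasFDerivAt_action_comp {V : E → ℝ} {Φ : ℝ → E × E → E × E} (hV : ContDiff ℝ 1 V)
    (hΦ : ContDiff ℝ 2 (uncurry Φ)) (hΦ₀ : ∀ p, Φ 0 p = p)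
    (hsol : ∀ p, IsHamiltonianTrajectory V fun s => Φ s p) (lam t : ℝ) {a b : H → E}
    {a' c' : H →L[ℝ] E} {w : H} (ha : HasFDerivAt a a' w) (hb : DifferentiableAt ℝ b w)
    (hc : HasFDerivAt (fun w => (Φ t (a w, b w)).1) c' w) :
    HasFDerivAt (fun w => action V lam Φ t (a w, b w))
      (innerSL ℝ (Φ t (a w, b w)).2 ∘L c' - innerSL ℝ (b w) ∘L a') w := by
  have hx : DifferentiableAt ℝ (fun p => (Φ t p).1) (a w, b w) :=
    (hΦ.comp (contDiff_prodMk_right t)).fst.differentiable two_ne_zero _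
  have hab := ha.prodMk hb.hasFDerivAt
  have hc' := hc.unique (hx.hasFDerivAt.comp (f := fun w => (a w, b w)) w hab)
  refine ((hasFDerivAt_action hV hΦ hsol lam t (a w, b w)).comp w hab).congr_fderiv ?_
  simp only [hΦ₀, hasFDerivAt_fst.fderiv, hc']
  rfl

theorem action_gradients_general {k : ℕ∞} (hk : 2 ≤ k) {V : E → ℝ} (hV : ContDiff ℝ k V)
    {Φ : ℝ → E × E → E × E} (hΦ : ContDiff ℝ k (uncurry Φ)) (hΦ₀ : ∀ p, Φ 0 p = p)
    (hsol : ∀ p, IsHamiltonianTrajectory V fun s => Φ s p) {U : Set (ℝ × E × E)} (hU : IsOpen U)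
    {ηh : ℝ → E → E → E}
    (hη : ContDiffOn ℝ k (fun q : ℝ × E × E => ηh q.1 q.2.1 q.2.2) U)
    (hsolve : ∀ t y z, (t, y, z) ∈ U → (Φ t (y, ηh t y z)).1 = z) (lam : ℝ) :
    ContDiffOn ℝ k
      (fun q : ℝ × E × E => action V lam Φ q.1 (q.2.1, ηh q.1 q.2.1 q.2.2)) U ∧
    ∀ t y z, (t, y, z) ∈ U →
      HasGradientAt (fun z' => action V lam Φ t (y, ηh t y z')) (Φ t (y, ηh t y z)).2 z ∧
      HasGradientAt (fun y' => action V lam Φ t (y', ηh t y' z)) (-ηh t y z) y := by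
  refine ⟨(contDiff_action hV hΦ lam).comp_contDiffOn
    (contDiffOn_fst.prodMk (contDiffOn_snd.fst.prodMk hη)), fun t y z hq => ?_⟩
  have hk₁ : (1 : WithTop ℕ∞) ≤ k := mod_cast one_le_two.trans hk
  have hV₁ : ContDiff ℝ 1 V := hV.of_le hk₁
  have hΦ₂ : ContDiff ℝ 2 (uncurry Φ) := hΦ.of_le (WithTop.coe_le_coe.2 hk)
  have hUq : U ∈ 𝓝 (t, y, z) := hU.mem_nhds hq
  have hηq : DifferentiableAt ℝ (fun q : ℝ × E × E => ηh q.1 q.2.1 q.2.2) (t, y, z) :=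
    ((hη.contDiffAt hUq).of_le hk₁).differentiableAt one_ne_zero
  simp only [hasGradientAt_iff_hasFDerivAt]
  constructor
  · have hend : ∀ᶠ z' in 𝓝 z, (Φ t (y, ηh t y z')).1 = z' :=
      ((Continuous.prodMk_right t).comp (.prodMk_right y)).continuousAt.eventually_mem hUq |>.mono
        fun z' => hsolve t y z'
    refine (hasFDerivAt_action_comp hV₁ hΦ₂ hΦ₀ hsol lam t (hasFDerivAt_const y z)
      (hηq.comp (f := fun z' => (t, y, z')) z (by fun_prop))
      ((hasFDerivAt_id z).congr_of_eventuallyEq hend)).congr_fderiv ?_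
    ext v
    simp
  · have hend : ∀ᶠ y' in 𝓝 y, (Φ t (y', ηh t y' z)).1 = z :=
      ((Continuous.prodMk_right t).comp (.prodMk_left z)).continuousAt.eventually_mem hUq |>.mono
        fun y' => hsolve t y' z
    refine (hasFDerivAt_action_comp hV₁ hΦ₂ hΦ₀ hsol lam t (hasFDerivAt_id y)
      (hηq.comp (f := fun y' => (t, y', z)) y (by fun_prop))
      ((hasFDerivAt_const z y).congr_of_eventuallyEq hend)).congr_fderiv ?_
    ext v
    simp

end Action

/-- **Spatial derivatives of the action.**  In the central field setting with action
`S(t,y,z) = ∫₀ᵗ (½‖ξ(s,y,η̂(t,y,z))‖² − V(x(s,y,η̂(t,y,z))) + λ) ds`, the action is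
smooth and, possibly after shrinking `T × Y × Z` around `(t₀, y₀, z₀)`,
`∇_z S(t,y,z) = ξ(t, y, η̂(t,y,z))` and `∇_y S(t,y,z) = −η̂(t,y,z)`. -/
theorem action_gradients
    (n : ℕ) (hn : 1 ≤ n)
    (V : Euc n → ℝ) (hV : ContDiff ℝ (⊤ : ℕ∞) V)
    (Φ : ℝ → Euc n × Euc n → Euc n × Euc n) (hΦ : IsGlobalHamFlow n V Φ)
    (t₀ : ℝ) (y₀ η₀ z₀ : Euc n) (hz₀ : z₀ = (Φ t₀ (y₀, η₀)).1)
    (hcf : IsUnit (fderiv ℝ (fun η => (Φ t₀ (y₀, η)).1) η₀))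
    (T : Set ℝ) (Y Z : Set (Euc n))
    (hT : IsOpen T) (hY : IsOpen Y) (hZ : IsOpen Z)
    (hconn : IsConnected (T ×ˢ Y ×ˢ Z))
    (ht₀ : t₀ ∈ T) (hy₀ : y₀ ∈ Y) (hz₀mem : z₀ ∈ Z)
    (ηh : ℝ → Euc n → Euc n → Euc n)
    (hηsmooth : ContDiffOn ℝ (⊤ : ℕ∞) (fun q : ℝ × Euc n × Euc n => ηh q.1 q.2.1 q.2.2)
      (T ×ˢ Y ×ˢ Z))
    (hη₀ : ηh t₀ y₀ z₀ = η₀)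
    (hsolve : ∀ t ∈ T, ∀ y ∈ Y, ∀ z ∈ Z, (Φ t (y, ηh t y z)).1 = z)
    (lam : ℝ) (S : ℝ → Euc n → Euc n → ℝ)
    (hS : ∀ t y z, S t y z = ∫ s in (0:ℝ)..t,
      ((1 / 2) * ‖(Φ s (y, ηh t y z)).2‖ ^ 2 - V (Φ s (y, ηh t y z)).1 + lam))
    :
    ContDiffOn ℝ (⊤ : ℕ∞) (fun q : ℝ × Euc n × Euc n => S q.1 q.2.1 q.2.2) (T ×ˢ Y ×ˢ Z) ∧
    ∃ (T' : Set ℝ) (Y' Z' : Set (Euc n)),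
      IsOpen T' ∧ IsOpen Y' ∧ IsOpen Z' ∧
      T' ⊆ T ∧ Y' ⊆ Y ∧ Z' ⊆ Z ∧
      t₀ ∈ T' ∧ y₀ ∈ Y' ∧ z₀ ∈ Z' ∧
      ∀ t ∈ T', ∀ y ∈ Y', ∀ z ∈ Z',
        gradient (fun z' => S t y z') z = (Φ t (y, ηh t y z)).2 ∧
        gradient (fun y' => S t y' z) y = -(ηh t y z) := by
  obtain rfl : S = fun t y z => action V lam Φ t (y, ηh t y z) := by
    ext t y z
    exact hS t y z
  obtain ⟨hsmooth, hgrad⟩ := action_gradients_general (U := T ×ˢ Y ×ˢ Z) (mod_cast le_top) hV hΦ.1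
    hΦ.2.1 (fun p t => hΦ.2.2.1 t p) (hT.prod (hY.prod hZ)) hηsmooth
    (fun t y z hq => hsolve t hq.1 y hq.2.1 z hq.2.2) lam
  exact ⟨hsmooth, T, Y, Z, hT, hY, hZ, subset_rfl, subset_rfl, subset_rfl, ht₀, hy₀, hz₀mem,
    fun t ht y hy z hz => (hgrad t y z ⟨ht, hy, hz⟩).imp (·.gradient) (·.gradient)⟩
end
end
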